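/- Let d ≥ 1, let γ be the standard Gaussian measure on ℝ^d, and let a, b ∈ ℝ^d. Then ∫ erf(⟨a,z⟩) · erf(⟨b,z⟩) dγ(z) = (2/π) · arcsin( 2⟨a,b⟩ / √( (1 + 2‖a‖₂²)(1 + 2‖b‖₂²) ) ), where erf(x) = (2/√π) ∫₀ˣ e^{−s²} ds is the error function. -/

import Mathlib

open MeasureTheory

/-- The standard Gaussian measure on `ℝ^d`: the law of `d` i.i.d. standard normals. -/
noncomputable def stdGaussian (d : ℕ) : Measure (Fin d → ℝ) :=
  Measure.pi fun _ : Fin d => ProbabilityTheory.gaussianReal 0 1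

/-- The error function `erf(x) = (2/√π) ∫₀ˣ e^{−s²} ds`. -/
noncomputable def erf (x : ℝ) : ℝ :=
  (2 / Real.sqrt Real.pi) * ∫ s in (0 : ℝ)..x, Real.exp (-(s ^ 2))

/-!
Since `erf x = E[sign (x + G)]` for `G ~ N(0, 1/2)`, the left-hand side of the kernel formula is
`E[sign (X + G₁) sign (Y + G₂)]` with independent noises `G₁`, `G₂`: the noise adds `1/2` to both
variances and leaves the covariance unchanged. It remains to apply Sheppard's formula
`E[sign U sign V] = (2/π) arcsin ρ` for a centered Gaussian pair with correlation `ρ`. For this,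
regress `V = t U + W` with `W` independent of `U`; integrating out `W` turns `sign V` into
`erf (c U)`, and `E[sign U erf (c U)]` is an arctangent because `sign u * erf (c u)` is the integral
of `(2/√π) |u| exp (-s² u²)` over `0 ≤ s ≤ c`.
-/

section JointlyGaussian

open Set
open ProbabilityTheory hiding stdGaussian
open scoped ENNReal NNReal

section SignErf

@[fun_prop]
theorem measurable_realSign : Measurable Real.sign :=
  Measurable.ite measurableSet_Iio measurable_const
    (Measurable.ite measurableSet_Ioi measurable_const measurable_const)

theorem abs_sign_le_one (x : ℝ) : |Real.sign x| ≤ 1 := by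
  rcases Real.sign_apply_eq x with h | h | h <;> simp [h]

theorem sign_mul_self_eq_abs (x : ℝ) : Real.sign x * x = |x| := by
  rcases lt_trichotomy x 0 with h | rfl | h
  · rw [Real.sign_of_neg h, abs_of_neg h, neg_one_mul]
  · simp
  · rw [Real.sign_of_pos h, abs_of_pos h, one_mul]

theorem integrable_sign_mul_sign {Ω : Type*} {mΩ : MeasurableSpace Ω} {P : Measure Ω}
    [IsFiniteMeasure P] {U V : Ω → ℝ} (hU : AEMeasurable U P) (hV : AEMeasurable V P) :
    Integrable (fun ω ↦ Real.sign (U ω) * Real.sign (V ω)) P := by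
  refine .of_bound (by fun_prop) 1 (.of_forall fun ω ↦ ?_)
  rw [Real.norm_eq_abs, abs_mul]
  exact mul_le_one₀ (abs_sign_le_one _) (abs_nonneg _) (abs_sign_le_one _)

theorem intervalIntegral_neg_self_of_even {f : ℝ → ℝ} {x : ℝ}
    (hf : IntervalIntegrable f volume 0 x) (heven : Function.Even f) :
    ∫ y in -x..x, f y = 2 * ∫ y in 0..x, f y := by
  have hf_neg : IntervalIntegrable f volume (-x) 0 := by
    simpa [heven _] using (IntervalIntegrable.comp_sub_left hf 0).symm
  have hreflect : ∫ y in -x..0, f y = ∫ y in 0..x, f y := by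
    simpa [heven _] using (intervalIntegral.integral_comp_neg (a := 0) (b := x) f).symm
  rw [← intervalIntegral.integral_add_adjacent_intervals hf_neg hf, hreflect, two_mul]

theorem integral_sign_add_mul_of_even {f : ℝ → ℝ} (hf : Integrable f) (heven : Function.Even f)
    (x : ℝ) : ∫ y, Real.sign (x + y) * f y = 2 * ∫ y in 0..x, f y := by
  have hint : Integrable fun y ↦ Real.sign (x + y) * f y :=
    hf.bdd_mul (by fun_prop : Measurable _).aestronglyMeasurable
      (.of_forall fun y ↦ abs_sign_le_one (x + y))
  have hleft : ∫ y in Iic (-x), Real.sign (x + y) * f y = -∫ y in Iic (-x), f y := by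
    rw [integral_Iic_eq_integral_Iio, integral_Iic_eq_integral_Iio, ← integral_neg]
    refine setIntegral_congr_fun measurableSet_Iio fun y (hy : y < -x) ↦ ?_
    rw [Real.sign_of_neg (by linarith), neg_one_mul]
  have hright : ∫ y in Ioi (-x), Real.sign (x + y) * f y = ∫ y in Ioi (-x), f y := by
    refine setIntegral_congr_fun measurableSet_Ioi fun y (hy : -x < y) ↦ ?_
    rw [Real.sign_of_pos (by linarith), one_mul]
  have hreflect : ∫ y in Ioi (-x), f y = ∫ y in Iic x, f y := by
    simpa [heven _] using integral_comp_neg_Ioi (-x) f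
  calc ∫ y, Real.sign (x + y) * f y
      = (∫ y in Iic x, f y) - ∫ y in Iic (-x), f y := by
        rw [← intervalIntegral.integral_Iic_add_Ioi (b := -x) hint.integrableOn hint.integrableOn,
          hleft, hright, hreflect, neg_add_eq_sub]
    _ = ∫ y in -x..x, f y :=
        intervalIntegral.integral_Iic_sub_Iic hf.integrableOn hf.integrableOn
    _ = 2 * ∫ y in 0..x, f y := intervalIntegral_neg_self_of_even hf.intervalIntegrable heven

theorem integral_sign_add_gaussianReal {v : ℝ≥0} (hv : v ≠ 0) (x : ℝ) :
    ∫ y, Real.sign (x + y) ∂gaussianReal 0 v = erf (x / √(2 * v)) := by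
  have heven : Function.Even (gaussianPDFReal 0 v) := fun y ↦ by simp [gaussianPDFReal]
  have hpdf (y : ℝ) : gaussianPDFReal 0 v y =
      (√Real.pi * √(2 * v))⁻¹ * Real.exp (-(y / √(2 * v)) ^ 2) := by
    rw [gaussianPDFReal, ← Real.sqrt_mul Real.pi_pos.le, div_pow, Real.sq_sqrt (by positivity),
      sub_zero, neg_div, mul_right_comm, mul_comm Real.pi]
  rw [integral_gaussianReal_eq_integral_smul hv]
  simp_rw [smul_eq_mul, mul_comm (gaussianPDFReal 0 v _)]
  rw [integral_sign_add_mul_of_even (integrable_gaussianPDFReal 0 v) heven]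
  simp_rw [hpdf]
  rw [intervalIntegral.integral_const_mul,
    intervalIntegral.integral_comp_div (fun s ↦ Real.exp (-s ^ 2)) (by positivity), erf, zero_div,
    smul_eq_mul]
  field_simp

theorem erf_eq_integral_sign (x : ℝ) :
    erf x = ∫ y, Real.sign (x + y) ∂gaussianReal 0 (1 / 2) := by
  simp [integral_sign_add_gaussianReal]

theorem sign_mul_erf (c x : ℝ) :
    Real.sign x * erf (c * x) =
      2 / √Real.pi * ∫ s in (0 : ℝ)..c, |x| * Real.exp (-s ^ 2 * x ^ 2) := by
  have hscale := intervalIntegral.mul_integral_comp_mul_right (a := 0) (b := c)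
    (f := fun s ↦ Real.exp (-s ^ 2)) x
  rw [zero_mul] at hscale
  rw [erf, ← hscale, intervalIntegral.integral_const_mul, ← sign_mul_self_eq_abs]
  simp_rw [mul_pow, neg_mul]
  rw [mul_left_comm, mul_assoc]

theorem integral_abs_mul_exp_neg_mul_sq {b : ℝ} (hb : 0 < b) :
    ∫ x, |x| * Real.exp (-b * x ^ 2) = b⁻¹ := by
  have hhalf : ∫ x in Ioi (0 : ℝ), x * Real.exp (-b * x ^ 2) = (2 * b)⁻¹ := by
    simpa [Real.rpow_neg_one, mul_comm] using
      integral_rpow_mul_exp_neg_mul_rpow (p := 2) (q := 1) two_pos (by norm_num) hb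
  have habs := integral_comp_abs (f := fun x ↦ x * Real.exp (-b * x ^ 2))
  simp_rw [sq_abs] at habs
  rw [habs, hhalf]
  field_simp

theorem integral_abs_mul_exp_gaussianReal {v : ℝ≥0} (hv : v ≠ 0) (s : ℝ) :
    ∫ x, |x| * Real.exp (-s ^ 2 * x ^ 2) ∂gaussianReal 0 v =
      √(2 * v) / √Real.pi * (1 + (√(2 * v) * s) ^ 2)⁻¹ := by
  have hintegrand (x : ℝ) : gaussianPDFReal 0 v x * (|x| * Real.exp (-s ^ 2 * x ^ 2)) =
      (√(2 * Real.pi * v))⁻¹ * (|x| * Real.exp (-(s ^ 2 + (2 * (v : ℝ))⁻¹) * x ^ 2)) := by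
    rw [gaussianPDFReal, sub_zero, mul_assoc, mul_left_comm (Real.exp _), ← Real.exp_add]
    congr 4
    field
  rw [integral_gaussianReal_eq_integral_smul hv]
  simp_rw [smul_eq_mul, hintegrand]
  rw [integral_const_mul, integral_abs_mul_exp_neg_mul_sq (by positivity), mul_right_comm 2,
    Real.sqrt_mul (by positivity), mul_pow, Real.sq_sqrt (by positivity)]
  field_simp
  rw [Real.sq_sqrt (by positivity)]
  ring

theorem integral_sign_mul_erf_gaussianReal {v : ℝ≥0} (hv : v ≠ 0) (c : ℝ) :
    ∫ x, Real.sign x * erf (c * x) ∂gaussianReal 0 v =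
      2 / Real.pi * Real.arctan (√(2 * v) * c) := by
  have hint : Integrable (Function.uncurry fun s x ↦ |x| * Real.exp (-s ^ 2 * x ^ 2))
      ((volume.restrict (uIoc 0 c)).prod (gaussianReal 0 v)) := by
    have habs : Integrable (fun x : ℝ ↦ |x|) (gaussianReal 0 v) :=
      ((memLp_id_gaussianReal 1).integrable le_rfl).abs
    have : IsFiniteMeasure (volume.restrict (uIoc 0 c)) := ⟨by simp [uIoc]⟩
    refine (habs.comp_snd _).mono (by fun_prop) (.of_forall fun ⟨s, x⟩ ↦ ?_)
    rw [Function.uncurry_apply_pair, norm_mul, Real.norm_of_nonneg (Real.exp_nonneg _)]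
    refine mul_le_of_le_one_right (norm_nonneg _) (Real.exp_le_one_iff.mpr ?_)
    nlinarith [sq_nonneg (s * x)]
  simp_rw [sign_mul_erf]
  rw [integral_const_mul, ← intervalIntegral_integral_swap hint]
  simp_rw [integral_abs_mul_exp_gaussianReal hv]
  have hscale := intervalIntegral.mul_integral_comp_mul_left (a := 0) (b := c)
    (f := fun s ↦ (1 + s ^ 2)⁻¹) √(2 * v)
  rw [mul_zero, integral_inv_one_add_sq, Real.arctan_zero, sub_zero] at hscale
  rw [intervalIntegral.integral_const_mul, ← hscale]
  field_simp
  rw [Real.sq_sqrt Real.pi_pos.le, mul_comm]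

end SignErf

section Regression

variable {Ω : Type*} {mΩ : MeasurableSpace Ω} {P : Measure Ω} {U V : Ω → ℝ}

theorem variance_sub_const_mul [IsFiniteMeasure P] (hU : MemLp U 2 P) (hV : MemLp V 2 P) (t : ℝ) :
    Var[fun ω ↦ V ω - t * U ω; P] = Var[V; P] - 2 * t * cov[U, V; P] + t ^ 2 * Var[U; P] := by
  rw [variance_fun_sub hV (hU.const_mul t), covariance_const_mul_right, variance_const_mul,
    covariance_comm V]
  ring

theorem sq_covariance_le [IsFiniteMeasure P] (hU : MemLp U 2 P) (hV : MemLp V 2 P) :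
    cov[U, V; P] ^ 2 ≤ Var[U; P] * Var[V; P] := by
  have hdiscrim : discrim Var[U; P] (-2 * cov[U, V; P]) Var[V; P] ≤ 0 := by
    refine discrim_le_zero fun t ↦ ?_
    have hvar := variance_nonneg (fun ω ↦ V ω - t * U ω) P
    rw [variance_sub_const_mul hU hV] at hvar
    linarith
  rw [discrim] at hdiscrim
  linarith

theorem sq_covariance_lt_variance_add_mul_variance_add [IsFiniteMeasure P] (hU : MemLp U 2 P)
    (hV : MemLp V 2 P) {s t : ℝ} (hs : 0 < s) (ht : 0 < t) :
    cov[U, V; P] ^ 2 < (Var[U; P] + s) * (Var[V; P] + t) :=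
  calc cov[U, V; P] ^ 2 ≤ Var[U; P] * Var[V; P] := sq_covariance_le hU hV
    _ < (Var[U; P] + s) * (Var[V; P] + t) :=
      mul_lt_mul'' (lt_add_of_pos_right _ hs) (lt_add_of_pos_right _ ht) (variance_nonneg U P)
        (variance_nonneg V P)

theorem variance_sub_regression [IsFiniteMeasure P] (hU : MemLp U 2 P) (hV : MemLp V 2 P)
    (hσ : Var[U; P] ≠ 0) :
    Var[fun ω ↦ V ω - cov[U, V; P] / Var[U; P] * U ω; P] =
      Var[V; P] - cov[U, V; P] ^ 2 / Var[U; P] := by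
  rw [variance_sub_const_mul hU hV]
  field

theorem covariance_sub_regression [IsFiniteMeasure P] (hU : MemLp U 2 P) (hV : MemLp V 2 P)
    (hσ : Var[U; P] ≠ 0) :
    cov[U, fun ω ↦ V ω - cov[U, V; P] / Var[U; P] * U ω; P] = 0 := by
  rw [covariance_fun_sub_right hU hV (hU.const_mul _), covariance_const_mul_right,
    covariance_self hU.aemeasurable, div_mul_cancel₀ _ hσ, sub_self]

theorem hasGaussianLaw_prodMk_sub_const_mul (hUV : HasGaussianLaw (fun ω ↦ (U ω, V ω)) P) (t : ℝ) :
    HasGaussianLaw (fun ω ↦ (U ω, V ω - t * U ω)) P :=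
  hUV.map ((ContinuousLinearMap.fst ℝ ℝ ℝ).prod
    (ContinuousLinearMap.snd ℝ ℝ ℝ - t • ContinuousLinearMap.fst ℝ ℝ ℝ))

theorem map_prodMk_sub_regression (hUV : HasGaussianLaw (fun ω ↦ (U ω, V ω)) P)
    (hU : P[U] = 0) (hV : P[V] = 0) (hσ : Var[U; P] ≠ 0) :
    P.map (fun ω ↦ (U ω, V ω - cov[U, V; P] / Var[U; P] * U ω)) =
      (gaussianReal 0 Var[U; P].toNNReal).prod
        (gaussianReal 0 (Var[V; P] - cov[U, V; P] ^ 2 / Var[U; P]).toNNReal) := by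
  have := hUV.isProbabilityMeasure
  have hpair := hasGaussianLaw_prodMk_sub_const_mul hUV (cov[U, V; P] / Var[U; P])
  have hindep := hpair.indepFun_of_covariance_eq_zero
    (covariance_sub_regression hUV.fst.memLp_two hUV.snd.memLp_two hσ)
  have hmean : ∫ ω, V ω - cov[U, V; P] / Var[U; P] * U ω ∂P = 0 := by
    rw [integral_sub hUV.snd.integrable (hUV.fst.integrable.const_mul _), integral_const_mul,
      hU, hV, mul_zero, sub_zero]
  rw [(indepFun_iff_map_prod_eq_prod_map_map hpair.fst.aemeasurable hpair.snd.aemeasurable).mp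
    hindep, hpair.fst.map_eq_gaussianReal, hpair.snd.map_eq_gaussianReal, hU, hmean,
    variance_sub_regression hUV.fst.memLp_two hUV.snd.memLp_two hσ]

end Regression

section Sheppard

theorem integral_sign_mul_sign_const_mul_add {v w : ℝ≥0} (hv : v ≠ 0) (hw : w ≠ 0) (t : ℝ) :
    ∫ p, Real.sign p.1 * Real.sign (t * p.1 + p.2) ∂(gaussianReal 0 v).prod (gaussianReal 0 w) =
      2 / Real.pi * Real.arctan (t * √(v / w)) := by
  rw [integral_prod _ (integrable_sign_mul_sign (by fun_prop) (by fun_prop))]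
  simp_rw [integral_const_mul, integral_sign_add_gaussianReal hw, mul_div_right_comm]
  rw [integral_sign_mul_erf_gaussianReal hv, mul_div_left_comm, ← Real.sqrt_div (by positivity),
    mul_div_mul_left _ _ two_ne_zero]

theorem arctan_regression_eq_arcsin {v w c : ℝ} (hv : 0 < v) (hc : c ^ 2 < v * w) :
    Real.arctan (c / v * √(v / (w - c ^ 2 / v))) = Real.arcsin (c / √(v * w)) := by
  have hvw : 0 < v * w := (sq_nonneg c).trans_lt hc
  have hρ : (c / √(v * w)) ^ 2 < 1 := by
    rwa [div_pow, Real.sq_sqrt hvw.le, div_lt_one hvw]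
  have hleft : √(v / (w - c ^ 2 / v)) = v / √(v * w - c ^ 2) := by
    rw [sub_div' hv.ne', div_div_eq_mul_div, mul_comm w, Real.sqrt_div (mul_self_nonneg v),
      Real.sqrt_mul_self hv.le]
  have hright : √(1 - (c / √(v * w)) ^ 2) = √(v * w - c ^ 2) / √(v * w) := by
    rw [div_pow, Real.sq_sqrt hvw.le, one_sub_div hvw.ne', Real.sqrt_div' _ hvw.le]
  rw [Real.arcsin_eq_arctan (abs_lt.mp ((sq_lt_one_iff_abs_lt_one _).mp hρ)), hleft, hright,
    div_div_div_cancel_right₀ (Real.sqrt_ne_zero'.mpr hvw), div_mul_div_cancel₀ hv.ne']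

theorem integral_sign_mul_sign {Ω : Type*} {mΩ : MeasurableSpace Ω} {P : Measure Ω} {U V : Ω → ℝ}
    (hUV : HasGaussianLaw (fun ω ↦ (U ω, V ω)) P) (hU : P[U] = 0) (hV : P[V] = 0)
    (hcov : cov[U, V; P] ^ 2 < Var[U; P] * Var[V; P]) :
    ∫ ω, Real.sign (U ω) * Real.sign (V ω) ∂P =
      2 / Real.pi * Real.arcsin (cov[U, V; P] / √(Var[U; P] * Var[V; P])) := by
  have := hUV.isProbabilityMeasure
  have hσ : 0 < Var[U; P] := (variance_nonneg U P).lt_of_ne' fun h ↦ by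
    rw [h, zero_mul] at hcov
    exact hcov.not_ge (sq_nonneg _)
  set t := cov[U, V; P] / Var[U; P] with ht
  have hw : 0 < Var[V; P] - cov[U, V; P] ^ 2 / Var[U; P] := by
    rwa [sub_pos, div_lt_iff₀' hσ]
  have hpair := (hasGaussianLaw_prodMk_sub_const_mul hUV t).aemeasurable
  calc ∫ ω, Real.sign (U ω) * Real.sign (V ω) ∂P
      = ∫ p, Real.sign p.1 * Real.sign (t * p.1 + p.2)
          ∂P.map fun ω ↦ (U ω, V ω - t * U ω) := by
        rw [integral_map hpair (by fun_prop : Measurable _).aestronglyMeasurable]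
        simp_rw [add_sub_cancel]
    _ = 2 / Real.pi * Real.arctan
          (t * √(Var[U; P] / (Var[V; P] - cov[U, V; P] ^ 2 / Var[U; P]))) := by
        rw [map_prodMk_sub_regression hUV hU hV hσ.ne',
          integral_sign_mul_sign_const_mul_add (by simpa) (by simpa using hw),
          Real.coe_toNNReal _ hσ.le, Real.coe_toNNReal _ hw.le]
    _ = 2 / Real.pi * Real.arcsin (cov[U, V; P] / √(Var[U; P] * Var[V; P])) := by
        rw [ht, arctan_regression_eq_arcsin hσ hcov]

end Sheppard

section MeasurePreserving

variable {Ω Ω' : Type*} {mΩ : MeasurableSpace Ω} {mΩ' : MeasurableSpace Ω'}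
  {P : Measure Ω} {Q : Measure Ω'} {f : Ω' → Ω}

theorem hasGaussianLaw_comp_measurePreserving {E : Type*} [TopologicalSpace E] [AddCommMonoid E]
    [Module ℝ E] [MeasurableSpace E] {X : Ω → E} (hX : HasGaussianLaw X P)
    (hf : MeasurePreserving f Q P) : HasGaussianLaw (fun ω ↦ X (f ω)) Q where
  isGaussian_map := by
    have hXf : AEMeasurable X (Q.map f) := hf.map_eq ▸ hX.aemeasurable
    rw [← Function.comp_def, ← hXf.map_map_of_aemeasurable hf.aemeasurable, hf.map_eq]
    exact hX.isGaussian_map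

theorem covariance_comp_measurePreserving {X Y : Ω → ℝ} (hX : AEStronglyMeasurable X P)
    (hY : AEStronglyMeasurable Y P) (hf : MeasurePreserving f Q P) :
    cov[fun ω ↦ X (f ω), fun ω ↦ Y (f ω); Q] = cov[X, Y; P] := by
  rw [← hf.map_eq] at hX hY
  rw [← covariance_map_fun hX hY hf.aemeasurable, hf.map_eq]

end MeasurePreserving

section IndependentSum

variable {Ω Ω' : Type*} {mΩ : MeasurableSpace Ω} {mΩ' : MeasurableSpace Ω'}
  {P : Measure Ω} {Q : Measure Ω'}

theorem hasGaussianLaw_add_prod {E : Type*} [NormedAddCommGroup E] [NormedSpace ℝ E]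
    [CompleteSpace E] [SecondCountableTopology E] [MeasurableSpace E] [BorelSpace E]
    {X : Ω → E} {Y : Ω' → E} (hX : HasGaussianLaw X P) (hY : HasGaussianLaw Y Q) :
    HasGaussianLaw (fun p ↦ X p.1 + Y p.2) (P.prod Q) := by
  have := hX.isProbabilityMeasure
  have := hY.isProbabilityMeasure
  exact iIndepFun.hasGaussianLaw_fun_add
    (hasGaussianLaw_comp_measurePreserving hX measurePreserving_fst)
    (hasGaussianLaw_comp_measurePreserving hY measurePreserving_snd)
    (indepFun_prod₀ hX.aemeasurable hY.aemeasurable)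

variable [IsProbabilityMeasure P] [IsProbabilityMeasure Q]

theorem integral_add_prod {E : Type*} [NormedAddCommGroup E] [NormedSpace ℝ E]
    {X : Ω → E} {Y : Ω' → E} (hX : Integrable X P) (hY : Integrable Y Q) :
    ∫ p, X p.1 + Y p.2 ∂P.prod Q = P[X] + Q[Y] := by
  rw [integral_add (hX.comp_fst Q) (hY.comp_snd P), integral_fun_fst, integral_fun_snd,
    probReal_univ, probReal_univ, one_smul, one_smul]

theorem covariance_add_prod {X₁ X₂ : Ω → ℝ} {Y₁ Y₂ : Ω' → ℝ} (hX₁ : MemLp X₁ 2 P)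
    (hX₂ : MemLp X₂ 2 P) (hY₁ : MemLp Y₁ 2 Q) (hY₂ : MemLp Y₂ 2 Q) :
    cov[fun p ↦ X₁ p.1 + Y₁ p.2, fun p ↦ X₂ p.1 + Y₂ p.2; P.prod Q] =
      cov[X₁, X₂; P] + cov[Y₁, Y₂; Q] := by
  have hX₁' := hX₁.comp_fst Q
  have hX₂' := hX₂.comp_fst Q
  have hY₁' := hY₁.comp_snd P
  have hY₂' := hY₂.comp_snd P
  change cov[(fun p ↦ X₁ p.1) + fun p ↦ Y₁ p.2, (fun p ↦ X₂ p.1) + fun p ↦ Y₂ p.2; P.prod Q] = _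
  rw [covariance_add_left hX₁' hY₁' (hX₂'.add hY₂'), covariance_add_right hX₁' hX₂' hY₂',
    covariance_add_right hY₁' hX₂' hY₂', covariance_fst_snd_prod hX₁ hY₂,
    covariance_comm (fun p : Ω × Ω' ↦ Y₁ p.2) fun p ↦ X₂ p.1, covariance_fst_snd_prod hX₂ hY₁,
    add_zero, zero_add, covariance_comp_measurePreserving hX₁.1 hX₂.1 measurePreserving_fst,
    covariance_comp_measurePreserving hY₁.1 hY₂.1 measurePreserving_snd]

end IndependentSum

section ErfKernel

theorem erf_mul_erf_eq_integral_sign_mul_sign (x y : ℝ) :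
    erf x * erf y = ∫ q, Real.sign (x + q.1) * Real.sign (y + q.2)
      ∂(gaussianReal 0 (1 / 2)).prod (gaussianReal 0 (1 / 2)) := by
  rw [erf_eq_integral_sign, erf_eq_integral_sign,
    integral_prod_mul (fun q ↦ Real.sign (x + q)) fun q ↦ Real.sign (y + q)]

variable {Ω : Type*} {mΩ : MeasurableSpace Ω} {P : Measure Ω} {X Y : Ω → ℝ}

theorem integral_erf_mul_erf_eq_integral_sign_mul_sign [IsFiniteMeasure P]
    (hX : AEMeasurable X P) (hY : AEMeasurable Y P) :
    ∫ ω, erf (X ω) * erf (Y ω) ∂P = ∫ p, Real.sign (X p.1 + p.2.1) * Real.sign (Y p.1 + p.2.2)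
      ∂P.prod ((gaussianReal 0 (1 / 2)).prod (gaussianReal 0 (1 / 2))) := by
  simp_rw [erf_mul_erf_eq_integral_sign_mul_sign]
  rw [integral_prod]
  exact integrable_sign_mul_sign (hX.comp_fst.add (by fun_prop)) (hY.comp_fst.add (by fun_prop))

theorem integral_sign_add_mul_sign_add (hXY : HasGaussianLaw (fun ω ↦ (X ω, Y ω)) P)
    (hX : P[X] = 0) (hY : P[Y] = 0) {s t : ℝ≥0} (hs : s ≠ 0) (ht : t ≠ 0) :
    ∫ p, Real.sign (X p.1 + p.2.1) * Real.sign (Y p.1 + p.2.2)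
      ∂P.prod ((gaussianReal 0 s).prod (gaussianReal 0 t)) =
      2 / Real.pi * Real.arcsin (cov[X, Y; P] / √((Var[X; P] + s) * (Var[Y; P] + t))) := by
  have := hXY.isProbabilityMeasure
  let N := (gaussianReal 0 s).prod (gaussianReal 0 t)
  have hN : HasGaussianLaw (fun q : ℝ × ℝ ↦ (q.1, q.2)) N := IsGaussian.hasGaussianLaw_id
  have hfst : MeasurePreserving Prod.fst N (gaussianReal 0 s) := measurePreserving_fst
  have hsnd : MeasurePreserving Prod.snd N (gaussianReal 0 t) := measurePreserving_snd
  have hlaw : HasGaussianLaw (fun p ↦ (X p.1 + p.2.1, Y p.1 + p.2.2)) (P.prod N) :=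
    hasGaussianLaw_add_prod hXY hN
  have hmeanX : ∫ p, X p.1 + p.2.1 ∂P.prod N = 0 := by
    rw [integral_add_prod hXY.fst.integrable hN.fst.integrable, hX, integral_fun_fst fun x ↦ x]
    simp
  have hmeanY : ∫ p, Y p.1 + p.2.2 ∂P.prod N = 0 := by
    rw [integral_add_prod hXY.snd.integrable hN.snd.integrable, hY, integral_fun_snd fun x ↦ x]
    simp
  have hcov : cov[fun p ↦ X p.1 + p.2.1, fun p ↦ Y p.1 + p.2.2; P.prod N] = cov[X, Y; P] := by
    rw [covariance_add_prod hXY.fst.memLp_two hXY.snd.memLp_two hN.fst.memLp_two hN.snd.memLp_two,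
      covariance_fst_snd_prod (X := fun x ↦ x) (Y := fun x ↦ x) (memLp_id_gaussianReal 2)
        (memLp_id_gaussianReal 2), add_zero]
  have hvarX : Var[fun p ↦ X p.1 + p.2.1; P.prod N] = Var[X; P] + s := by
    rw [variance_add_prod hXY.fst.memLp_two hN.fst.memLp_two,
      hfst.variance_fun_comp (f := fun x ↦ x) (by fun_prop), variance_fun_id_gaussianReal]
  have hvarY : Var[fun p ↦ Y p.1 + p.2.2; P.prod N] = Var[Y; P] + t := by
    rw [variance_add_prod hXY.snd.memLp_two hN.snd.memLp_two,
      hsnd.variance_fun_comp (f := fun x ↦ x) (by fun_prop), variance_fun_id_gaussianReal]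
  rw [integral_sign_mul_sign hlaw hmeanX hmeanY, hcov, hvarX, hvarY]
  rw [hcov, hvarX, hvarY]
  exact sq_covariance_lt_variance_add_mul_variance_add hXY.fst.memLp_two hXY.snd.memLp_two
    (by positivity) (by positivity)

theorem erf_kernel_general (hXY : HasGaussianLaw (fun ω ↦ (X ω, Y ω)) P)
    (hX : P[X] = 0) (hY : P[Y] = 0) :
    ∫ ω, erf (X ω) * erf (Y ω) ∂P =
      2 / Real.pi * Real.arcsin (2 * cov[X, Y; P] /
        √((1 + 2 * Var[X; P]) * (1 + 2 * Var[Y; P]))) := by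
  have := hXY.isProbabilityMeasure
  have hscale : (1 + 2 * Var[X; P]) * (1 + 2 * Var[Y; P]) =
      2 ^ 2 * ((Var[X; P] + (1 / 2 : ℝ≥0)) * (Var[Y; P] + (1 / 2 : ℝ≥0))) := by
    push_cast
    ring
  rw [integral_erf_mul_erf_eq_integral_sign_mul_sign hXY.fst.aemeasurable hXY.snd.aemeasurable,
    integral_sign_add_mul_sign_add hXY hX hY (by simp) (by simp), hscale,
    Real.sqrt_mul (sq_nonneg 2), Real.sqrt_sq two_pos.le, mul_div_mul_left _ _ two_ne_zero]

end ErfKernel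

section LinearForms

variable {ι : Type*} [Fintype ι]

section Pi

variable {E : ι → Type*} [∀ i, NormedAddCommGroup (E i)] [∀ i, NormedSpace ℝ (E i)]
  [∀ i, MeasurableSpace (E i)] (μ : ∀ i, Measure (E i)) [∀ i, IsGaussian (μ i)]

theorem hasGaussianLaw_eval_pi (i : ι) :
    HasGaussianLaw (fun z : ∀ i, E i ↦ z i) (Measure.pi μ) :=
  hasGaussianLaw_comp_measurePreserving IsGaussian.hasGaussianLaw_id (measurePreserving_eval μ i)

instance isGaussian_pi [∀ i, CompleteSpace (E i)] [∀ i, BorelSpace (E i)]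
    [∀ i, SecondCountableTopology (E i)] : IsGaussian (Measure.pi μ) := by
  have hindep : iIndepFun (fun i (z : ∀ i, E i) ↦ z i) (Measure.pi μ) :=
    iIndepFun_pi (X := fun _ ↦ id) fun _ ↦ aemeasurable_id
  have hlaw := iIndepFun.hasGaussianLaw (hasGaussianLaw_eval_pi μ) hindep
  rw [← Measure.map_id' (μ := Measure.pi μ)]
  exact hlaw.isGaussian_map

end Pi

theorem hasGaussianLaw_linearForms_pi (μ : ι → Measure ℝ) [∀ i, IsGaussian (μ i)] (a b : ι → ℝ) :
    HasGaussianLaw (fun z : ι → ℝ ↦ (∑ i, a i * z i, ∑ i, b i * z i)) (Measure.pi μ) := by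
  let form (c : ι → ℝ) : (ι → ℝ) →L[ℝ] ℝ := ∑ i, c i • ContinuousLinearMap.proj i
  have hforms : (fun z : ι → ℝ ↦ (∑ i, a i * z i, ∑ i, b i * z i)) =
      (form a).prod (form b) ∘ id := by
    ext z <;> simp [form]
  rw [hforms]
  exact IsGaussian.hasGaussianLaw_id.map _

variable {μ : ι → Measure ℝ} [∀ i, IsProbabilityMeasure (μ i)]

theorem integral_sum_mul_pi (hμ : ∀ i, Integrable id (μ i)) (a : ι → ℝ) :
    ∫ z, ∑ i, a i * z i ∂Measure.pi μ = ∑ i, a i * ∫ x, x ∂μ i := by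
  rw [integral_finsetSum _ fun i _ ↦ (integrable_eval (hμ i)).const_mul (a i)]
  simp_rw [integral_const_mul, integral_eval]

theorem memLp_eval_pi {p : ℝ≥0∞} {i : ι} (hμ : MemLp id p (μ i)) :
    MemLp (fun z : ι → ℝ ↦ z i) p (Measure.pi μ) :=
  hμ.comp_measurePreserving (measurePreserving_eval μ i)

theorem covariance_eval_pi [DecidableEq ι] (hμ : ∀ i, MemLp id 2 (μ i)) (i j : ι) :
    cov[fun z ↦ z i, fun z ↦ z j; Measure.pi μ] = if i = j then Var[id; μ i] else 0 := by
  split_ifs with hij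
  · rw [← hij, covariance_self (memLp_eval_pi (hμ i)).aemeasurable]
    exact (measurePreserving_eval μ i).variance_fun_comp aemeasurable_id
  · have hindep : iIndepFun (fun i (z : ι → ℝ) ↦ z i) (Measure.pi μ) :=
      iIndepFun_pi (X := fun _ ↦ id) fun _ ↦ aemeasurable_id
    exact (hindep.indepFun hij).covariance_eq_zero (memLp_eval_pi (hμ i)) (memLp_eval_pi (hμ j))

theorem covariance_sum_mul_pi (hμ : ∀ i, MemLp id 2 (μ i)) (a b : ι → ℝ) :
    cov[fun z ↦ ∑ i, a i * z i, fun z ↦ ∑ i, b i * z i; Measure.pi μ] =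
      ∑ i, a i * b i * Var[id; μ i] := by
  classical
  have hterm (c : ι → ℝ) (i : ι) : MemLp (fun z : ι → ℝ ↦ c i * z i) 2 (Measure.pi μ) :=
    (memLp_eval_pi (hμ i)).const_mul (c i)
  rw [covariance_fun_sum_fun_sum (hterm a) (hterm b)]
  simp_rw [covariance_const_mul_left, covariance_const_mul_right, covariance_eval_pi hμ]
  simp [mul_assoc]

section StdGaussian

variable {d : ℕ}

theorem integral_sum_mul_stdGaussian (a : Fin d → ℝ) :
    ∫ z, ∑ i, a i * z i ∂stdGaussian d = 0 := by
  rw [stdGaussian, integral_sum_mul_pi fun _ ↦ (memLp_id_gaussianReal 1).integrable le_rfl]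
  simp

theorem covariance_sum_mul_stdGaussian (a b : Fin d → ℝ) :
    cov[fun z ↦ ∑ i, a i * z i, fun z ↦ ∑ i, b i * z i; stdGaussian d] = ∑ i, a i * b i := by
  rw [stdGaussian, covariance_sum_mul_pi fun _ ↦ memLp_id_gaussianReal 2]
  simp

theorem variance_sum_mul_stdGaussian (a : Fin d → ℝ) :
    Var[fun z ↦ ∑ i, a i * z i; stdGaussian d] = ∑ i, a i ^ 2 := by
  rw [← covariance_self (by fun_prop : Measurable _).aemeasurable, covariance_sum_mul_stdGaussian]
  simp_rw [sq]

end StdGaussian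

end LinearForms

end JointlyGaussian

/-- The erf kernel: for `a, b ∈ ℝ^d`,
`∫ erf(⟨a,z⟩) erf(⟨b,z⟩) dγ(z) = (2/π) arcsin(2⟨a,b⟩/√((1+2‖a‖²)(1+2‖b‖²)))`. -/
theorem erf_kernel (d : ℕ) (hd : 1 ≤ d) (a b : Fin d → ℝ) :
    ∫ z, erf (∑ i, a i * z i) * erf (∑ i, b i * z i) ∂(stdGaussian d) =
      (2 / Real.pi) *
        Real.arcsin ((2 * ∑ i, a i * b i) /
          Real.sqrt ((1 + 2 * ∑ i, a i ^ 2) * (1 + 2 * ∑ i, b i ^ 2))) := by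
  rw [← covariance_sum_mul_stdGaussian, ← variance_sum_mul_stdGaussian a,
    ← variance_sum_mul_stdGaussian b]
  exact erf_kernel_general (hasGaussianLaw_linearForms_pi _ a b) (integral_sum_mul_stdGaussian a)
    (integral_sum_mul_stdGaussian b)
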